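/- Let M be a symmetric positive definite n×n matrix and let P, P̃ be invertible n×n matrices. Define Ŝ = PᵀM⁻¹P and S̃ = P̃ᵀM⁻¹P̃. Then for every nonzero vector v, σ_min(P P̃⁻¹)² / cond(M) ≤ (vᵀ Ŝ v)/(vᵀ S̃ v) ≤ σ_max(P P̃⁻¹)² · cond(M), where σ_min, σ_max denote the smallest and largest singular values and cond(M) = λ_max(M)/λ_min(M). -/

import Mathlib

open Matrix

/-!
Let `l ≤ M ≤ L` as quadratic forms, with `M` symmetric and `0 < l`. Expanding `0 ≤ ⟨y, y⟩` for
`y = M x - l x` and `0 ≤ ⟨y, M y⟩` for `y = M x - L x` gives `l ⟨x, M x⟩ ≤ ⟨M x, M x⟩ ≤ L ⟨x, M x⟩`,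
which at `x = M⁻¹ w` reads `l ⟨w, M⁻¹ w⟩ ≤ ⟨w, w⟩ ≤ L ⟨w, M⁻¹ w⟩`. With `w = P v` and `w = P̃ v`,
both forms of the quotient are thus comparable to Euclidean ones, and these are related by the
singular values of `P P̃⁻¹` because `P v = (P P̃⁻¹) (P̃ v)`.
-/

section OrderedRing

variable {ι R : Type*} [Fintype ι] [CommRing R] [LinearOrder R] [IsStrictOrderedRing R]

theorem dotProduct_self_nonneg (u : ι → R) : 0 ≤ u ⬝ᵥ u :=
  Finset.sum_nonneg fun i _ => mul_self_nonneg (u i)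

theorem dotProduct_self_pos {u : ι → R} (hu : u ≠ 0) : 0 < u ⬝ᵥ u :=
  (dotProduct_self_nonneg u).lt_of_ne' (dotProduct_self_eq_zero.not.mpr hu)

theorem mul_dotProduct_mulVec_le_mulVec_dotProduct_mulVec {M : Matrix ι ι R} {l : R} (hl : 0 ≤ l)
    (hM : ∀ u : ι → R, l * (u ⬝ᵥ u) ≤ u ⬝ᵥ M *ᵥ u) (x : ι → R) :
    l * (x ⬝ᵥ M *ᵥ x) ≤ M *ᵥ x ⬝ᵥ M *ᵥ x := by
  have hsq : 0 ≤ (M *ᵥ x - l • x) ⬝ᵥ (M *ᵥ x - l • x) := dotProduct_self_nonneg _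
  simp only [sub_dotProduct, dotProduct_sub, smul_dotProduct, dotProduct_smul, smul_eq_mul,
    dotProduct_comm (M *ᵥ x) x] at hsq
  linarith [mul_le_mul_of_nonneg_left (hM x) hl]

theorem mulVec_dotProduct_mulVec_le_mul_dotProduct_mulVec {M : Matrix ι ι R} (hsymm : M.IsSymm)
    (hM₀ : ∀ u : ι → R, 0 ≤ u ⬝ᵥ M *ᵥ u) {L : R} (hL : 0 < L)
    (hM : ∀ u : ι → R, u ⬝ᵥ M *ᵥ u ≤ L * (u ⬝ᵥ u)) (x : ι → R) :
    M *ᵥ x ⬝ᵥ M *ᵥ x ≤ L * (x ⬝ᵥ M *ᵥ x) := by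
  have hself : x ⬝ᵥ M *ᵥ (M *ᵥ x) = M *ᵥ x ⬝ᵥ M *ᵥ x := by
    rw [← dotProduct_transpose_mulVec, hsymm.eq]
  have hsq : 0 ≤ (M *ᵥ x - L • x) ⬝ᵥ M *ᵥ (M *ᵥ x - L • x) := hM₀ _
  simp only [mulVec_sub, mulVec_smul, sub_dotProduct, dotProduct_sub, smul_dotProduct,
    dotProduct_smul, smul_eq_mul, hself] at hsq
  refine le_of_mul_le_mul_left ?_ hL
  linarith [hM (M *ᵥ x)]

end OrderedRing

theorem dotProduct_transpose_mul_mul_mulVec {m n R : Type*} [Fintype m] [Fintype n]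
    [CommSemiring R] (Q : Matrix m n R) (A : Matrix m m R) (x y : n → R) :
    x ⬝ᵥ (Qᵀ * A * Q) *ᵥ y = Q *ᵥ x ⬝ᵥ A *ᵥ (Q *ᵥ y) := by
  rw [← mulVec_mulVec, ← mulVec_mulVec, dotProduct_transpose_mulVec, dotProduct_comm]

theorem mulVec_inv_mulVec_of_isUnit {n R : Type*} [Fintype n] [DecidableEq n] [CommRing R]
    {A : Matrix n n R} (hA : IsUnit A) (w : n → R) : A *ᵥ (A⁻¹ *ᵥ w) = w := by
  rw [mulVec_mulVec, mul_nonsing_inv A ((isUnit_iff_isUnit_det A).mp hA), one_mulVec]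

section OrderedField

variable {ι K : Type*} [Fintype ι] [DecidableEq ι] [Field K] [LinearOrder K]
  [IsStrictOrderedRing K] {M : Matrix ι ι K} {l L : K}

theorem isUnit_of_forall_mul_dotProduct_self_le (hl : 0 < l)
    (hM : ∀ u : ι → K, l * (u ⬝ᵥ u) ≤ u ⬝ᵥ M *ᵥ u) : IsUnit M := by
  rw [isUnit_iff_isUnit_det, isUnit_iff_ne_zero, Ne, ← exists_mulVec_eq_zero_iff]
  rintro ⟨u, hu, hMu⟩
  have hle : l * (u ⬝ᵥ u) ≤ 0 := by simpa only [hMu, dotProduct_zero] using hM u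
  exact (mul_pos hl (dotProduct_self_pos hu)).not_ge hle

theorem dotProduct_inv_mulVec_pos (hl : 0 < l)
    (hM : ∀ u : ι → K, l * (u ⬝ᵥ u) ≤ u ⬝ᵥ M *ᵥ u) {w : ι → K} (hw : w ≠ 0) :
    0 < w ⬝ᵥ M⁻¹ *ᵥ w := by
  have hMx : M *ᵥ (M⁻¹ *ᵥ w) = w :=
    mulVec_inv_mulVec_of_isUnit (isUnit_of_forall_mul_dotProduct_self_le hl hM) w
  have hx : M⁻¹ *ᵥ w ≠ 0 := fun h => hw (by rw [← hMx, h, mulVec_zero])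
  have hle := hM (M⁻¹ *ᵥ w)
  rw [hMx, dotProduct_comm _ w] at hle
  exact (mul_pos hl (dotProduct_self_pos hx)).trans_le hle

theorem mul_dotProduct_inv_mulVec_le (hl : 0 < l)
    (hM : ∀ u : ι → K, l * (u ⬝ᵥ u) ≤ u ⬝ᵥ M *ᵥ u) (w : ι → K) :
    l * (w ⬝ᵥ M⁻¹ *ᵥ w) ≤ w ⬝ᵥ w := by
  simpa only [mulVec_inv_mulVec_of_isUnit (isUnit_of_forall_mul_dotProduct_self_le hl hM),
    dotProduct_comm (M⁻¹ *ᵥ w)] using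
    mul_dotProduct_mulVec_le_mulVec_dotProduct_mulVec hl.le hM (M⁻¹ *ᵥ w)

theorem dotProduct_self_le_mul_dotProduct_inv_mulVec (hsymm : M.IsSymm) (hunit : IsUnit M)
    (hM₀ : ∀ u : ι → K, 0 ≤ u ⬝ᵥ M *ᵥ u) (hL : 0 < L)
    (hM : ∀ u : ι → K, u ⬝ᵥ M *ᵥ u ≤ L * (u ⬝ᵥ u)) (w : ι → K) :
    w ⬝ᵥ w ≤ L * (w ⬝ᵥ M⁻¹ *ᵥ w) := by
  simpa only [mulVec_inv_mulVec_of_isUnit hunit, dotProduct_comm (M⁻¹ *ᵥ w)] using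
    mulVec_dotProduct_mulVec_le_mul_dotProduct_mulVec hsymm hM₀ hL hM (M⁻¹ *ᵥ w)

theorem mul_mul_dotProduct_inv_mulVec_le_of_mul_dotProduct_self_le (hsymm : M.IsSymm) (hl : 0 < l)
    (hL : 0 < L) (hM_lb : ∀ u : ι → K, l * (u ⬝ᵥ u) ≤ u ⬝ᵥ M *ᵥ u)
    (hM_ub : ∀ u : ι → K, u ⬝ᵥ M *ᵥ u ≤ L * (u ⬝ᵥ u)) {c d : K} (hc : 0 ≤ c) (hd : 0 ≤ d)
    {x y : ι → K} (hxy : c * (x ⬝ᵥ x) ≤ d * (y ⬝ᵥ y)) :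
    c * (l * (x ⬝ᵥ M⁻¹ *ᵥ x)) ≤ d * (L * (y ⬝ᵥ M⁻¹ *ᵥ y)) := by
  have hM₀ (u : ι → K) : 0 ≤ u ⬝ᵥ M *ᵥ u :=
    (mul_nonneg hl.le (dotProduct_self_nonneg u)).trans (hM_lb u)
  have hunit : IsUnit M := isUnit_of_forall_mul_dotProduct_self_le hl hM_lb
  calc c * (l * (x ⬝ᵥ M⁻¹ *ᵥ x))
      ≤ c * (x ⬝ᵥ x) := by gcongr; exact mul_dotProduct_inv_mulVec_le hl hM_lb x
    _ ≤ d * (y ⬝ᵥ y) := hxy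
    _ ≤ d * (L * (y ⬝ᵥ M⁻¹ *ᵥ y)) := by
      gcongr; exact dotProduct_self_le_mul_dotProduct_inv_mulVec hsymm hunit hM₀ hL hM_ub y

theorem stmt6_general {P Pt : Matrix ι ι K} (hM : M.IsSymm) (hPt : IsUnit Pt)
    {smin smax lmin lmax : K} (hlmin : 0 < lmin)
    (hM_lb : ∀ u : ι → K, lmin * (u ⬝ᵥ u) ≤ u ⬝ᵥ M *ᵥ u)
    (hM_ub : ∀ u : ι → K, u ⬝ᵥ M *ᵥ u ≤ lmax * (u ⬝ᵥ u))
    (hsmin : ∀ u : ι → K,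
      smin ^ 2 * (u ⬝ᵥ u) ≤ (P * Pt⁻¹) *ᵥ u ⬝ᵥ (P * Pt⁻¹) *ᵥ u)
    (hsmax : ∀ u : ι → K,
      (P * Pt⁻¹) *ᵥ u ⬝ᵥ (P * Pt⁻¹) *ᵥ u ≤ smax ^ 2 * (u ⬝ᵥ u))
    {v : ι → K} (hv : v ≠ 0) :
    smin ^ 2 / (lmax / lmin) ≤
        (v ⬝ᵥ (Pᵀ * M⁻¹ * P) *ᵥ v) / (v ⬝ᵥ (Ptᵀ * M⁻¹ * Pt) *ᵥ v) ∧
      (v ⬝ᵥ (Pᵀ * M⁻¹ * P) *ᵥ v) / (v ⬝ᵥ (Ptᵀ * M⁻¹ * Pt) *ᵥ v) ≤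
        smax ^ 2 * (lmax / lmin) := by
  have hlmax : 0 < lmax := hlmin.trans_le <|
    le_of_mul_le_mul_right ((hM_lb v).trans (hM_ub v)) (dotProduct_self_pos hv)
  have hPtv : Pt *ᵥ v ≠ 0 := fun h =>
    hv (mulVec_injective_of_isUnit hPt (h.trans (mulVec_zero Pt).symm))
  have hPv : (P * Pt⁻¹) *ᵥ (Pt *ᵥ v) = P *ᵥ v := by
    rw [mulVec_mulVec, nonsing_inv_mul_cancel_right _ _ ((isUnit_iff_isUnit_det Pt).mp hPt)]
  have hmin : smin ^ 2 * (Pt *ᵥ v ⬝ᵥ Pt *ᵥ v) ≤ 1 * (P *ᵥ v ⬝ᵥ P *ᵥ v) := by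
    simpa only [hPv, one_mul] using hsmin (Pt *ᵥ v)
  have hmax : 1 * (P *ᵥ v ⬝ᵥ P *ᵥ v) ≤ smax ^ 2 * (Pt *ᵥ v ⬝ᵥ Pt *ᵥ v) := by
    simpa only [hPv, one_mul] using hsmax (Pt *ᵥ v)
  have hpos := dotProduct_inv_mulVec_pos hlmin hM_lb hPtv
  have lower := mul_mul_dotProduct_inv_mulVec_le_of_mul_dotProduct_self_le hM hlmin hlmax
    hM_lb hM_ub (sq_nonneg smin) zero_le_one hmin
  have upper := mul_mul_dotProduct_inv_mulVec_le_of_mul_dotProduct_self_le hM hlmin hlmax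
    hM_lb hM_ub zero_le_one (sq_nonneg smax) hmax
  simp only [dotProduct_transpose_mul_mul_mulVec]
  constructor
  · rw [div_div_eq_mul_div, div_le_div_iff₀ hlmax hpos]
    linarith
  · rw [← mul_div_assoc, div_le_div_iff₀ hpos hlmin]
    linarith

end OrderedField

/-- Spectral equivalence between Ŝ = PᵀM⁻¹P and S̃ = P̃ᵀM⁻¹P̃ in terms of the
extreme singular values of P P̃⁻¹ and the condition number cond(M) = λmax/λmin. -/
theorem stmt6 {n : ℕ} (M P Pt : Matrix (Fin n) (Fin n) ℝ) (hM : M.PosDef)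
    (hP : IsUnit P) (hPt : IsUnit Pt)
    (smin smax lmin lmax : ℝ) (hlmin : 0 < lmin) (hlmax : lmin ≤ lmax)
    (hsmin0 : 0 ≤ smin)
    (hM_lb : ∀ u : Fin n → ℝ, lmin * (u ⬝ᵥ u) ≤ u ⬝ᵥ M.mulVec u)
    (hM_ub : ∀ u : Fin n → ℝ, u ⬝ᵥ M.mulVec u ≤ lmax * (u ⬝ᵥ u))
    (hsmin : ∀ u : Fin n → ℝ,
      smin ^ 2 * (u ⬝ᵥ u) ≤ ((P * Pt⁻¹).mulVec u) ⬝ᵥ ((P * Pt⁻¹).mulVec u))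
    (hsmax : ∀ u : Fin n → ℝ,
      ((P * Pt⁻¹).mulVec u) ⬝ᵥ ((P * Pt⁻¹).mulVec u) ≤ smax ^ 2 * (u ⬝ᵥ u)) :
    ∀ v : Fin n → ℝ, v ≠ 0 →
      smin ^ 2 / (lmax / lmin) ≤
          (v ⬝ᵥ (Pᵀ * M⁻¹ * P).mulVec v) / (v ⬝ᵥ (Ptᵀ * M⁻¹ * Pt).mulVec v) ∧
        (v ⬝ᵥ (Pᵀ * M⁻¹ * P).mulVec v) / (v ⬝ᵥ (Ptᵀ * M⁻¹ * Pt).mulVec v) ≤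
          smax ^ 2 * (lmax / lmin) :=
  fun _ hv => stmt6_general (isHermitian_iff_isSymm.mp hM.isHermitian) hPt hlmin hM_lb hM_ub
    hsmin hsmax hv
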